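/- arXiv:1805.01857 — 6 statements merged into one kernel-verified Lean document; each statement's English description precedes it below -/
import Mathlib

section
/- Let A be a commutative ring equipped with a ring involution * in which 2 is invertible, and let π ∈ A satisfy π* = −π and the condition that the only hermitian element of A annihilated by π is 0 (i.e., if a* = a and πa = 0 then a = 0) (the ramified even case). Let V be an A-module, h a sesquilinear form on V, and P an A-submodule of V. Then {v ∈ V : (h(v,u))* = h(v,u) for all u ∈ P} = {v ∈ V : h(v,u) = 0 for all u ∈ P}; that is, the orthogonal complement of P with respect to the skew part of h coincides with the orthogonal complement of P with respect to h. -/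
/-- Ramified even case: if `π* = -π` and the only hermitian element of `A`
annihilated by `π` is `0`, then for any sesquilinear form `h` on an
`A`-module `V` and any submodule `P`, the orthogonal complement of `P` with
respect to the skew part of `h` coincides with the orthogonal complement of
`P` with respect to `h`. -/
theorem stmt_3 {A V : Type*} [CommRing A] [AddCommGroup V] [Module A V]
    (σ : A →+* A) (hσ : ∀ a : A, σ (σ a) = a)
    (h2 : IsUnit (2 : A))
    (π : A) (hπ : σ π = -π)
    (hann : ∀ a : A, σ a = a → π * a = 0 → a = 0)
    (h : V → V → A)
    (hadd₁ : ∀ x x' y : V, h (x + x') y = h x y + h x' y)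
    (hadd₂ : ∀ x y y' : V, h x (y + y') = h x y + h x y')
    (hsmul₁ : ∀ (a : A) (x y : V), h (a • x) y = σ a * h x y)
    (hsmul₂ : ∀ (a : A) (x y : V), h x (a • y) = a * h x y)
    (P : Submodule A V) :
    {v : V | ∀ u ∈ P, σ (h v u) = h v u} = {v : V | ∀ u ∈ P, h v u = 0} := by
  ext v
  simp only [Set.mem_setOf_eq]
  constructor
  · intro hv u hu
    have h1 := hv u hu
    have h3 := hv (π • u) (P.smul_mem π hu)
    rw [hsmul₂, map_mul, hπ, h1] at h3
    refine hann _ h1 (h2.mul_left_cancel ?_)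
    linear_combination -h3
  · intro hv u hu
    rw [hv u hu, map_zero]
end

section
/- Let A be a commutative ring equipped with a ring involution * in which 2 is invertible, and let π ∈ A satisfy π* = −π and the condition that the only skew-hermitian element of A annihilated by π is 0 (i.e., if a* = −a and πa = 0 then a = 0) (the ramified odd case). Let V be an A-module, h a sesquilinear form on V, and P an A-submodule of V. Then {v ∈ V : (h(v,u))* = −h(v,u) for all u ∈ P} = {v ∈ V : h(v,u) = 0 for all u ∈ P}. -/
/-- Ramified odd case: if `π* = -π` and the only skew-hermitian element of `A`
annihilated by `π` is `0`, then for any sesquilinear form `h` on an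
`A`-module `V` and any submodule `P`, the vectors `v` with `h(v,u)`
skew-hermitian for all `u ∈ P` are exactly those with `h(v,u) = 0` for all
`u ∈ P`. -/
theorem stmt_4 {A V : Type*} [CommRing A] [AddCommGroup V] [Module A V]
    (σ : A →+* A) (hσ : ∀ a : A, σ (σ a) = a)
    (h2 : IsUnit (2 : A))
    (π : A) (hπ : σ π = -π)
    (hann : ∀ a : A, σ a = -a → π * a = 0 → a = 0)
    (h : V → V → A)
    (hadd₁ : ∀ x x' y : V, h (x + x') y = h x y + h x' y)
    (hadd₂ : ∀ x y y' : V, h x (y + y') = h x y + h x y')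
    (hsmul₁ : ∀ (a : A) (x y : V), h (a • x) y = σ a * h x y)
    (hsmul₂ : ∀ (a : A) (x y : V), h x (a • y) = a * h x y)
    (P : Submodule A V) :
    {v : V | ∀ u ∈ P, σ (h v u) = -h v u} = {v : V | ∀ u ∈ P, h v u = 0} := by
  ext v
  constructor
  · intro hv u hu
    have h1 := hv u hu
    have h3 := hv (π • u) (P.smul_mem π hu)
    rw [hsmul₂, map_mul, hπ, h1] at h3
    refine hann _ h1 (h2.mul_left_cancel ?_)
    linear_combination h3
  · intro hv u hu
    rw [hv u hu]
    simp
end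

section
/- Let A be a commutative ring equipped with a ring involution * in which 2 is invertible, and let i, j be ideals of A such that a* ∈ j for every a ∈ j, j² ⊆ i, and i² = (0). Then for z ∈ j, one has (1+z)·(1+z)* = 1 if and only if there exists s ∈ j with s* = −s and z = s²/2 + s; moreover such s is unique (it is the skew-hermitian part of z). In particular, the elements of N ∩ (1+j) are exactly those of the form 1 + s²/2 + s with s a skew-hermitian element of j, and s ↦ 1 + s²/2 + s is a bijection from the skew-hermitian elements of j onto N ∩ (1+j). -/
/-- Let `i, j` be ideals with `j` `*`-invariant, `j² ⊆ i` and `i² = (0)`, in a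
commutative ring with involution in which 2 is invertible. Then for `z ∈ j`,
`(1+z)(1+z)* = 1` iff `z = s²/2 + s` for a unique skew-hermitian `s ∈ j`.
Consequently `s ↦ 1 + s²/2 + s` is a bijection from the skew-hermitian
elements of `j` onto `N ∩ (1 + j)`. -/
theorem stmt_7 {A : Type*} [CommRing A]
    (σ : A →+* A) (hσ : ∀ a : A, σ (σ a) = a)
    [Invertible (2 : A)]
    (i j : Ideal A) (hjstar : ∀ a ∈ j, σ a ∈ j)
    (hji : j * j ≤ i) (hi2 : i * i = ⊥) :
    (∀ z ∈ j, ((1 + z) * σ (1 + z) = 1 ↔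
      ∃! s : A, s ∈ j ∧ σ s = -s ∧ z = ⅟(2 : A) * s ^ 2 + s)) ∧
    Set.BijOn (fun s : A => 1 + ⅟(2 : A) * s ^ 2 + s)
      {s : A | s ∈ j ∧ σ s = -s}
      {a : A | a * σ a = 1 ∧ ∃ z ∈ j, a = 1 + z} := by
  
  have h2 : (2 : A) * ⅟(2 : A) = 1 := mul_invOf_self 2
  generalize ⅟(2 : A) = h at *
  have hh : σ h = h := by
    have e : (2 : A) * σ h = 1 := by
      have := congrArg σ h2
      rwa [map_mul, map_ofNat, map_one] at this
    linear_combination h * e - σ h * h2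
  have hsq : ∀ a ∈ i, a * a = 0 := fun a ha => by
    have : a * a ∈ i * i := Ideal.mul_mem_mul ha ha
    rwa [hi2, Ideal.mem_bot] at this
  have key : ∀ s ∈ j, σ s = -s →
      (1 + (h * s ^ 2 + s)) * σ (1 + (h * s ^ 2 + s)) = 1 := by
    intro s hs hss
    have h4 := hsq _ (hji (Ideal.mul_mem_mul hs hs))
    simp only [map_add, map_mul, map_pow, map_one, hh, hss]
    linear_combination h ^ 2 * h4 + s ^ 2 * h2
  have uniq : ∀ z s : A, σ s = -s → z = h * s ^ 2 + s → s = h * (z - σ z) := by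
    intro z s hss hz
    subst hz
    simp only [map_add, map_mul, map_pow, hh, hss]
    linear_combination -s * h2
  have ex : ∀ z ∈ j, (1 + z) * σ (1 + z) = 1 →
      ∃ s : A, s ∈ j ∧ σ s = -s ∧ z = h * s ^ 2 + s := by
    intro z hz hN
    have hsj : h * (z - σ z) ∈ j := j.mul_mem_left _ (j.sub_mem hz (hjstar z hz))
    rw [map_add, map_one] at hN
    have hr : h * (z + σ z) ∈ i := by
      have : h * (z + σ z) = (-h) * (z * σ z) := by linear_combination h * hN
      rw [this]
      exact i.mul_mem_left _ (hji (Ideal.mul_mem_mul hz (hjstar z hz)))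
    have hr2 := hsq _ hr
    refine ⟨h * (z - σ z), hsj, ?_, ?_⟩
    · simp only [map_mul, map_sub, hh, hσ]; ring
    · generalize σ z = w at *
      have h4 : 4 * h ^ 2 = 1 := by linear_combination (2 * h + 1) * h2
      linear_combination (-z) * h2 + h * hN - h * hr2 + h * z * w * h4
  refine ⟨fun z hz => ⟨fun hN => ?_, ?_⟩, ?_, ?_, ?_⟩
  · obtain ⟨s, hs, hss, hzs⟩ := ex z hz hN
    refine ⟨s, ⟨hs, hss, hzs⟩, ?_⟩
    rintro t ⟨_, htt, hzt⟩
    rw [uniq z t htt hzt, ← uniq z s hss hzs]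
  · rintro ⟨s, ⟨hs, hss, rfl⟩, _⟩
    exact key s hs hss
  · rintro s ⟨hs, hss⟩
    have e : 1 + h * s ^ 2 + s = 1 + (h * s ^ 2 + s) := add_assoc _ _ _
    refine ⟨?_, h * s ^ 2 + s, ?_, e⟩
    · simp only [e]; exact key s hs hss
    · exact j.add_mem (j.mul_mem_left _ (j.pow_mem_of_mem hs 2 (by norm_num))) hs
  · rintro s ⟨hs, hss⟩ t ⟨ht, htt⟩ hst
    have hst' : h * s ^ 2 + s = h * t ^ 2 + t := by
      simp only at hst
      linear_combination hst
    rw [uniq _ s hss rfl, uniq _ t htt hst']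
  · rintro a ⟨hN, z, hz, rfl⟩
    obtain ⟨s, hs, hss, hzs⟩ := ex z hz hN
    refine ⟨s, ⟨hs, hss⟩, ?_⟩
    simp only
    rw [hzs, add_assoc]
end

section
/- Let A be a commutative ring equipped with a ring involution * and let i be an ideal of A with i² = (0) and a* ∈ i for every a ∈ i. Let V be an A-module and h a skew-hermitian sesquilinear form on V. Then for every a ∈ i and arbitrary vectors z₁, z₂ ∈ V (not assumed isotropic or orthogonal), the map ρ : V → V defined by ρ(x) = x + a·h(z₁,x)•z₂ + (a*)·h(z₂,x)•z₁ is A-linear, satisfies h(ρ(x), ρ(y)) = h(x,y) for all x, y ∈ V, and satisfies ρ(x) − x ∈ iV for all x ∈ V; that is, ρ lies in the congruence subgroup Ω(i) of the unitary group of h. -/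
/-- If `i` is a `*`-invariant ideal with `i² = (0)` and `h` is a
skew-hermitian sesquilinear form on `V`, then for every `a ∈ i` and arbitrary
`z₁, z₂ ∈ V` the map `ρ(x) = x + a·h(z₁,x)•z₂ + a*·h(z₂,x)•z₁` is `A`-linear,
preserves `h`, and satisfies `ρ(x) - x ∈ iV`; that is, `ρ ∈ Ω(i)`. -/
theorem stmt_10 {A V : Type*} [CommRing A] [AddCommGroup V] [Module A V]
    (σ : A →+* A) (hσ : ∀ a : A, σ (σ a) = a)
    (i : Ideal A) (hi2 : i * i = ⊥) (histar : ∀ a ∈ i, σ a ∈ i)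
    (h : V → V → A)
    (hadd₁ : ∀ x x' y : V, h (x + x') y = h x y + h x' y)
    (hadd₂ : ∀ x y y' : V, h x (y + y') = h x y + h x y')
    (hsmul₁ : ∀ (a : A) (x y : V), h (a • x) y = σ a * h x y)
    (hsmul₂ : ∀ (a : A) (x y : V), h x (a • y) = a * h x y)
    (hskew : ∀ x y : V, h y x = -σ (h x y))
    (a : A) (ha : a ∈ i) (z₁ z₂ : V) :
    let ρ : V → V := fun x => x + (a * h z₁ x) • z₂ + (σ a * h z₂ x) • z₁
    (∀ x y : V, ρ (x + y) = ρ x + ρ y) ∧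
    (∀ (c : A) (x : V), ρ (c • x) = c • ρ x) ∧
    (∀ x y : V, h (ρ x) (ρ y) = h x y) ∧
    (∀ x : V, ρ x - x ∈ i • (⊤ : Submodule A V)) := by
  intro ρ
  have hz : ∀ p ∈ i, ∀ q ∈ i, p * q = 0 := fun p hp q hq => by
    have := Ideal.mul_mem_mul hp hq
    rwa [hi2, Ideal.mem_bot] at this
  have hs := histar a ha
  have e1 := hz a ha a ha
  have e2 := hz a ha _ hs
  have e3 := hz _ hs _ hs
  refine ⟨fun x y => ?_, fun c x => ?_, fun x y => ?_, fun x => ?_⟩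
  · simp only [ρ, hadd₂]
    module
  · simp only [ρ, hsmul₂]
    module
  · simp only [ρ, hadd₁, hadd₂, hsmul₁, hsmul₂, map_mul, hσ]
    rw [hskew z₂ x, hskew z₁ x]
    linear_combination
      (σ (h z₂ x) * h z₁ y * h z₁ z₂) * e1
      + (σ (h z₁ x) * h z₁ y * h z₂ z₂ + σ (h z₂ x) * h z₂ y * h z₁ z₁) * e2
      + (σ (h z₁ x) * h z₂ y * h z₂ z₁) * e3
  · have : ρ x - x = (a * h z₁ x) • z₂ + (σ a * h z₂ x) • z₁ := by
      simp only [ρ]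
      abel
    rw [this]
    exact add_mem
      (Submodule.smul_mem_smul (Ideal.mul_mem_right _ _ ha) Submodule.mem_top)
      (Submodule.smul_mem_smul (Ideal.mul_mem_right _ _ hs) Submodule.mem_top)
end

section
/- Let A be a commutative ring, let i be an ideal of A with i² = (0), and let V be an A-module. If g₁, g₂ : V → V are A-linear maps satisfying g₁(v) − v ∈ iV and g₂(v) − v ∈ iV for all v ∈ V, then g₁ ∘ g₂ = g₂ ∘ g₁. (That is, if k² = (0) then the congruence subgroup Ω(k) is abelian.) -/
theorem stmt_13_aux {A V : Type*} [CommRing A] [AddCommGroup V] [Module A V]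
    (i : Ideal A) (hi2 : i * i = ⊥) (g : V →ₗ[A] V)
    (hg : ∀ v : V, g v - v ∈ i • (⊤ : Submodule A V)) (w : V)
    (hw : w ∈ i • (⊤ : Submodule A V)) : g w = w := by
  refine Submodule.smul_induction_on hw ?_ ?_
  · intro c hc u _
    have h : c • (g u - u) ∈ i • (i • (⊤ : Submodule A V)) :=
      Submodule.smul_mem_smul hc (hg u)
    rw [← Submodule.mul_smul, hi2, Submodule.bot_smul, Submodule.mem_bot, smul_sub,
      sub_eq_zero] at h
    rw [map_smul, h]
  · intro x y hx hy
    rw [map_add, hx, hy]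

/-- If `i² = (0)` and `g₁, g₂` are `A`-linear maps congruent to the identity
modulo `iV`, then `g₁` and `g₂` commute: if `k² = (0)` then the congruence
subgroup `Ω(k)` is abelian. -/
theorem stmt_13 {A V : Type*} [CommRing A] [AddCommGroup V] [Module A V]
    (i : Ideal A) (hi2 : i * i = ⊥)
    (g₁ g₂ : V →ₗ[A] V)
    (hg₁ : ∀ v : V, g₁ v - v ∈ i • (⊤ : Submodule A V))
    (hg₂ : ∀ v : V, g₂ v - v ∈ i • (⊤ : Submodule A V)) :
    ∀ v : V, g₁ (g₂ v) = g₂ (g₁ v) := by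
  intro v
  have h1 := stmt_13_aux i hi2 g₁ hg₁ _ (hg₂ v)
  have h2 := stmt_13_aux i hi2 g₂ hg₂ _ (hg₁ v)
  rw [map_sub, sub_eq_iff_eq_add] at h1 h2
  rw [h1, h2]
  abel
end

section
/- Let A be a commutative ring equipped with a ring involution *, and let i, j be ideals of A with a* ∈ i for every a ∈ i and i·j = (0). Let V be an A-module, h a skew-hermitian sesquilinear form on V, and define f(x,y) = h(x,y) + (h(x,y))*. Fix t ∈ V. Let x : V → V be an A-linear map with x(t) − t ∈ jV, and let g : V → V be an A-linear map with g(v) − v ∈ iV for all v ∈ V. Then f(g(x(t)), x(t)) = f(g(t), t). (This is the key identity showing that every element of G_t stabilizes the linear character α_t of Ω(i).) -/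
/-- Key identity showing that every element of `G_t` stabilizes the linear
character `α_t` of `Ω(i)`: with `i` `*`-invariant, `i·j = (0)`, `h` a
skew-hermitian sesquilinear form, `f = h + σ ∘ h`, `x` linear with
`x(t) - t ∈ jV` and `g` linear with `g(v) - v ∈ iV` for all `v`, one has
`f(g(x(t)), x(t)) = f(g(t), t)`. -/
theorem stmt_15 {A V : Type*} [CommRing A] [AddCommGroup V] [Module A V]
    (σ : A →+* A) (hσ : ∀ a : A, σ (σ a) = a)
    (i j : Ideal A) (histar : ∀ a ∈ i, σ a ∈ i) (hij : i * j = ⊥)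
    (h : V → V → A)
    (hadd₁ : ∀ x x' y : V, h (x + x') y = h x y + h x' y)
    (hadd₂ : ∀ x y y' : V, h x (y + y') = h x y + h x y')
    (hsmul₁ : ∀ (a : A) (x y : V), h (a • x) y = σ a * h x y)
    (hsmul₂ : ∀ (a : A) (x y : V), h x (a • y) = a * h x y)
    (hskew : ∀ x y : V, h y x = -σ (h x y))
    (t : V)
    (x : V →ₗ[A] V) (hx : x t - t ∈ j • (⊤ : Submodule A V))
    (g : V →ₗ[A] V) (hg : ∀ v : V, g v - v ∈ i • (⊤ : Submodule A V)) :
    h (g (x t)) (x t) + σ (h (g (x t)) (x t)) = h (g t) t + σ (h (g t) t) := by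
  have hab : ∀ a ∈ i, ∀ b ∈ j, a * b = 0 := by
    intro a ha b hb
    have := Ideal.mul_mem_mul ha hb
    rw [hij] at this
    simpa using this
  have hz₁ : ∀ y : V, h 0 y = 0 := fun y => by
    have := hadd₁ 0 0 y
    simpa using this
  have hz₂ : ∀ y : V, h y 0 = 0 := fun y => by
    have := hadd₂ y 0 0
    simpa using this
  have hbw : ∀ b ∈ j, ∀ w ∈ i • (⊤ : Submodule A V), b • w = 0 := by
    intro b hb w hw
    induction hw using Submodule.smul_induction_on' with
    | smul a ha n _ => rw [smul_smul, mul_comm, hab a ha b hb, zero_smul]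
    | add p _ q _ hp hq => rw [smul_add, hp, hq, add_zero]
  have hgu : ∀ u ∈ j • (⊤ : Submodule A V), g u = u := by
    intro u hu
    induction hu using Submodule.smul_induction_on' with
    | smul b hb n _ =>
      have := hbw b hb _ (hg n)
      rw [smul_sub, sub_eq_zero] at this
      rw [map_smul, this]
    | add p _ q _ hp hq => rw [map_add, hp, hq]
  have hwb : ∀ b ∈ j, ∀ n : V, ∀ w ∈ i • (⊤ : Submodule A V), h w (b • n) = 0 := by
    intro b hb n w hw
    induction hw using Submodule.smul_induction_on' with
    | smul a ha m _ =>
      rw [hsmul₁, hsmul₂, ← mul_assoc, hab _ (histar a ha) b hb, zero_mul]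
    | add p _ q _ hp hq => rw [hadd₁, hp, hq, add_zero]
  have hwu : ∀ w ∈ i • (⊤ : Submodule A V), ∀ u ∈ j • (⊤ : Submodule A V), h w u = 0 := by
    intro w hw u hu
    induction hu using Submodule.smul_induction_on' with
    | smul b hb n _ => exact hwb b hb n w hw
    | add p _ q _ hp hq => rw [hadd₂, hp, hq, add_zero]
  have hf : ∀ v : V, h v v + σ (h v v) = 0 := fun v => by
    have := hskew v v
    nth_rewrite 1 [this]
    simp
  have key : ∀ v : V, h (g v) v + σ (h (g v) v) = h (g v - v) v + σ (h (g v - v) v) := by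
    intro v
    have e : h (g v) v = h (g v - v) v + h v v := by rw [← hadd₁, sub_add_cancel]
    rw [e, map_add]
    linear_combination hf v
  have e1 : g (x t) - x t = g t - t := by
    have := hgu _ hx
    rw [map_sub] at this
    rw [sub_eq_sub_iff_sub_eq_sub, this]
  have e2 : h (g t - t) (x t) = h (g t - t) t := by
    have := hadd₂ (g t - t) (x t - t) t
    rwa [sub_add_cancel, hwu _ (hg t) _ hx, zero_add] at this
  rw [key (x t), key t, e1, e2]
end
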